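/- Among all graphs in G_{6,11}, there is a unique graph G that is p-optimal for all sufficiently large p ∈ (0,1): G is the simple graph on 6 vertices with degree sequence (4,4,4,4,3,3) whose two degree-3 vertices are non-adjacent, and G is a balanced weak subdivision of the Petersen graph. Moreover, the other simple graph G′ on 6 vertices with degree sequence (4,4,4,4,3,3) (with its two degree-3 vertices adjacent), which is also a balanced weak subdivision of the Petersen graph, has 225 spanning trees while G has 224, so G′ is strictly more reliable than G for all sufficiently small p. In particular, no uniquely optimal graph exists in G_{6,11}. -/

import Mathlib

open Classical Finset

noncomputable section

/-- A finite multigraph: edges carry two (possibly equal) endpoints. -/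
structure Multigraph where
  V : Type
  E : Type
  [fintV : Fintype V]
  [fintE : Fintype E]
  src : E → V
  tgt : E → V

attribute [instance] Multigraph.fintV Multigraph.fintE

namespace Multigraph

variable (G : Multigraph)

/-- Number of vertices. -/
def nV : ℕ := Fintype.card G.V

/-- Number of edges (with multiplicity). -/
def nE : ℕ := Fintype.card G.E

/-- One step along an edge belonging to the edge set `S`. -/
def stepOn (S : Finset G.E) (u v : G.V) : Prop :=
  ∃ e ∈ S, (G.src e = u ∧ G.tgt e = v) ∨ (G.src e = v ∧ G.tgt e = u)

/-- The spanning subgraph with edge set `S` is connected. -/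
def ConnOn (S : Finset G.E) : Prop :=
  ∀ u v : G.V, Relation.ReflTransGen (G.stepOn S) u v

/-- `G` is connected. -/
def Connected : Prop := G.ConnOn Finset.univ

/-- The edge set `F` disconnects `G` (i.e. is a disconnection). -/
def Disconnects (F : Finset G.E) : Prop := ¬ G.ConnOn (Finset.univ \ F)

/-- `d i G`: the number of `i`-disconnections of `G`. -/
def d (i : ℕ) : ℕ :=
  ((Finset.univ : Finset (Finset G.E)).filter fun F => F.card = i ∧ G.Disconnects F).card

/-- The all-terminal reliability `R(G,p)`: each edge is independently retained with
probability `p`; this is the probability that the retained spanning subgraph is connected. -/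
def rel (p : ℝ) : ℝ :=
  ∑ S : Finset G.E, if G.ConnOn S then p ^ S.card * (1 - p) ^ (G.nE - S.card) else 0

/-- `e` is a bridge. -/
def IsBridge (e : G.E) : Prop := G.Disconnects {e}

def Bridgeless : Prop := ∀ e : G.E, ¬ G.IsBridge e

/-- The number of spanning trees of `G` (connected spanning subgraphs with `nV - 1` edges). -/
def treeCount : ℕ :=
  ((Finset.univ : Finset (Finset G.E)).filter fun S => S.card + 1 = G.nV ∧ G.ConnOn S).card

/-- The edge-connectivity: the least size of a disconnecting set of edges. -/
def edgeConnectivity : ℕ :=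
  sInf {i : ℕ | ∃ F : Finset G.E, F.card = i ∧ G.Disconnects F}

/-- Degree of a vertex (a loop counts twice). -/
def deg (v : G.V) : ℕ :=
  (Finset.univ.filter fun e => G.src e = v).card +
    (Finset.univ.filter fun e => G.tgt e = v).card

/-- The edges crossing the vertex set `A`. -/
def cutEdges (A : Finset G.V) : Finset G.E :=
  Finset.univ.filter fun e =>
    (G.src e ∈ A ∧ G.tgt e ∉ A) ∨ (G.src e ∉ A ∧ G.tgt e ∈ A)

/-- `F` is a cut: the set of edges crossing a nontrivial bipartition of the vertices. -/
def IsCut (F : Finset G.E) : Prop :=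
  ∃ A : Finset G.V, A.Nonempty ∧ A ≠ Finset.univ ∧ F = G.cutEdges A

/-- `F` is a bond: a minimal cut. -/
def IsBond (F : Finset G.E) : Prop :=
  G.IsCut F ∧ ∀ F' ⊆ F, G.IsCut F' → F' = F

/-- Number of `s`-bonds of `G`. -/
def bondCount (s : ℕ) : ℕ :=
  ((Finset.univ : Finset (Finset G.E)).filter fun F => F.card = s ∧ G.IsBond F).card

/-- Adjacency of vertices. -/
def Adj (u v : G.V) : Prop :=
  ∃ e : G.E, (G.src e = u ∧ G.tgt e = v) ∨ (G.src e = v ∧ G.tgt e = u)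

/-- `G` is simple: no loops and no parallel edges. -/
def IsSimple : Prop :=
  (∀ e : G.E, G.src e ≠ G.tgt e) ∧
    ∀ e f : G.E,
      ((G.src e = G.src f ∧ G.tgt e = G.tgt f) ∨ (G.src e = G.tgt f ∧ G.tgt e = G.src f)) →
        e = f

end Multigraph

/-- `G ∈ 𝒢_{n,m}`: connected with `n` vertices and `m` edges. -/
def memG (G : Multigraph) (n m : ℕ) : Prop :=
  G.nV = n ∧ G.nE = m ∧ G.Connected

/-- Isomorphism of multigraphs. -/
structure MGIso (G H : Multigraph) where
  vMap : G.V ≃ H.V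
  eMap : G.E ≃ H.E
  ends_eq : ∀ e : G.E,
    (H.src (eMap e) = vMap (G.src e) ∧ H.tgt (eMap e) = vMap (G.tgt e)) ∨
    (H.src (eMap e) = vMap (G.tgt e) ∧ H.tgt (eMap e) = vMap (G.src e))

def IsIso (G H : Multigraph) : Prop := Nonempty (MGIso G H)

/-- `G` is `p`-optimal in `𝒢_{n,m}`. -/
def pOptimal (G : Multigraph) (n m : ℕ) (p : ℝ) : Prop :=
  memG G n m ∧ ∀ H : Multigraph, memG H n m → H.rel p ≤ G.rel p

/-- `G` is uniquely optimal in `𝒢_{n,m}`: strictly more reliable than every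
non-isomorphic member, for every `p ∈ (0,1)`. -/
def UniquelyOptimal (G : Multigraph) (n m : ℕ) : Prop :=
  memG G n m ∧ ∀ H : Multigraph, memG H n m → ¬ IsIso G H →
    ∀ p : ℝ, 0 < p → p < 1 → H.rel p < G.rel p

noncomputable instance quotFintype {α : Type} [Fintype α] {r : α → α → Prop} :
    Fintype (Quot r) :=
  letI := Classical.decEq (Quot r)
  Fintype.ofSurjective (Quot.mk r) fun q => Quot.exists_rep q

/-- Identification of the endpoints of zero-weight edges. -/
def zeroRel (D : Multigraph) (w : D.E → ℕ) : D.V → D.V → Prop :=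
  fun u v => ∃ e : D.E, w e = 0 ∧ D.src e = u ∧ D.tgt e = v

/-- The `j`-th node along the chain replacing the edge `e` (whose chain has `w e` edges). -/
def chainNode (D : Multigraph) (w : D.E → ℕ) (e : D.E) (j : ℕ) :
    Quot (zeroRel D w) ⊕ (Σ f : D.E, Fin (w f - 1)) :=
  if h : 0 < j ∧ j < w e then Sum.inr ⟨e, ⟨j - 1, by omega⟩⟩
  else if j = 0 then Sum.inl (Quot.mk _ (D.src e))
  else Sum.inl (Quot.mk _ (D.tgt e))

/-- The weak subdivision of `D` determined by the chain lengths `w`: each edge `e` is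
replaced by a chain with `w e` edges; zero-weight edges are contracted. -/
def subdivide (D : Multigraph) (w : D.E → ℕ) : Multigraph where
  V := Quot (zeroRel D w) ⊕ (Σ f : D.E, Fin (w f - 1))
  E := Σ f : D.E, Fin (w f)
  src f := chainNode D w f.1 f.2.val
  tgt f := chainNode D w f.1 (f.2.val + 1)

/-- The zero-weight edges contain no cycle (no "zero cycle"): they form a forest. -/
def ZeroAcyclic (D : Multigraph) (w : D.E → ℕ) : Prop :=
  Fintype.card (Quot (zeroRel D w)) +
      (Finset.univ.filter fun e : D.E => w e = 0).card = Fintype.card D.V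

/-- `G` is a weak subdivision of `D` with chain lengths `w`. -/
def IsWeakSubdivision (G D : Multigraph) (w : D.E → ℕ) : Prop :=
  ZeroAcyclic D w ∧ IsIso G (subdivide D w)

/-- `D` is a weak distillation of `G`. -/
def IsWeakDistillation (D G : Multigraph) : Prop :=
  ∃ w : D.E → ℕ, IsWeakSubdivision G D w

/-- The chain lengths differ pairwise by at most one. -/
def BalancedWeights {E : Type} (w : E → ℕ) : Prop := ∀ e f : E, w e ≤ w f + 1

/-- `D ∈ 𝒟_k`: connected, cubic, 3-edge-connected, of exceedance `k`. -/
def memDk (k : ℕ) (D : Multigraph) : Prop :=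
  D.Connected ∧ (∀ v : D.V, D.deg v = 3) ∧
    (∀ F : Finset D.E, D.Disconnects F → 3 ≤ F.card) ∧ D.nE = D.nV + k

/-- Identification of the two endpoints of the edge `e`. -/
def contractRel (G : Multigraph) (e : G.E) : G.V → G.V → Prop :=
  fun u v => u = G.src e ∧ v = G.tgt e

/-- Contraction of the edge `e`. -/
def Multigraph.contract (G : Multigraph) (e : G.E) : Multigraph :=
  letI := Classical.decEq G.E
  { V := Quot (contractRel G e)
    E := {f : G.E // f ≠ e}
    src := fun f => Quot.mk _ (G.src f.1)
    tgt := fun f => Quot.mk _ (G.tgt f.1) }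

/-- `G'` is obtained from `G` by shifting an edge: in an intermediate graph `H`
(the expansion of `G` at a vertex by the new edge `e'`), the edges `e, e'` form a
2-bond; contracting `e'` gives back `G`, while contracting `e` gives `G'`. -/
def IsShiftOf (G G' : Multigraph) : Prop :=
  ∃ (H : Multigraph) (e e' : H.E), e ≠ e' ∧
    H.src e ≠ H.tgt e ∧ H.src e' ≠ H.tgt e' ∧
    H.IsBond {e, e'} ∧
    IsIso (H.contract e') G ∧ IsIso (H.contract e) G'

/-- Equivalence of graphs: repeated edge shifting. -/
def EquivalentGraphs (G G' : Multigraph) : Prop :=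
  Relation.ReflTransGen IsShiftOf G G'

/-- `G'` is obtained from `G` by moving the (non-loop) edge `e`: contracting `e` and
expanding a new edge, identified with `e` via `φ`, at an arbitrary vertex.
Equivalently, `G/e` and `G'/φ e` agree, compatibly with the edge identification `φ`. -/
def MovedEdge (G G' : Multigraph) (φ : G.E ≃ G'.E) (e : G.E) : Prop :=
  G.src e ≠ G.tgt e ∧ G'.src (φ e) ≠ G'.tgt (φ e) ∧
  ∃ ψ : Quot (contractRel G e) ≃ Quot (contractRel G' (φ e)),
    ∀ f : G.E, f ≠ e →
      ((ψ (Quot.mk _ (G.src f)) = Quot.mk _ (G'.src (φ f)) ∧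
        ψ (Quot.mk _ (G.tgt f)) = Quot.mk _ (G'.tgt (φ f))) ∨
       (ψ (Quot.mk _ (G.src f)) = Quot.mk _ (G'.tgt (φ f)) ∧
        ψ (Quot.mk _ (G.tgt f)) = Quot.mk _ (G'.src (φ f))))

/-- Move one edge from the chain `a` to the chain `b`. -/
def moveWeight {E : Type} (w : E → ℕ) (a b : E) : E → ℕ :=
  fun g => if g = b then w b + 1 else if g = a then w a - 1 else w g

/-- The chains of maximal length. -/
def maxChains (D : Multigraph) (w : D.E → ℕ) : Finset D.E :=
  Finset.univ.filter fun e => ∀ f : D.E, w f ≤ w e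

/-- The chains of minimal length. -/
def minChains (D : Multigraph) (w : D.E → ℕ) : Finset D.E :=
  Finset.univ.filter fun e => ∀ f : D.E, w e ≤ w f

/-- Degree of `v` within the edge set `S`. -/
def degIn (D : Multigraph) (S : Finset D.E) (v : D.V) : ℕ :=
  (S.filter fun e => D.src e = v).card + (S.filter fun e => D.tgt e = v).card

/-- `S` is a matching (pairwise non-adjacent edges). -/
def IsMatchingIn (D : Multigraph) (S : Finset D.E) : Prop := ∀ v : D.V, degIn D S v ≤ 1

/-- `S` is a path with three edges. -/
def IsPath3In (D : Multigraph) (S : Finset D.E) : Prop :=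
  S.card = 3 ∧ (∀ v : D.V, degIn D S v ≤ 2) ∧
    (Finset.univ.filter fun v : D.V => degIn D S v = 1).card = 2

/-- `S` is the disjoint union of a path with three edges and a single edge. -/
def IsPath3PlusEdgeIn (D : Multigraph) (S : Finset D.E) : Prop :=
  S.card = 4 ∧ (∀ v : D.V, degIn D S v ≤ 2) ∧
    (Finset.univ.filter fun v : D.V => degIn D S v = 1).card = 4 ∧
    ∃ e ∈ S, degIn D S (D.src e) = 2 ∧ degIn D S (D.tgt e) = 2

/-- `S` is the disjoint union of two paths with two edges each. -/
def IsTwoPlusTwoIn (D : Multigraph) (S : Finset D.E) : Prop :=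
  S.card = 4 ∧ (∀ v : D.V, degIn D S v ≤ 2) ∧
    (Finset.univ.filter fun v : D.V => degIn D S v = 1).card = 4 ∧
    ∀ e ∈ S, degIn D S (D.src e) = 1 ∨ degIn D S (D.tgt e) = 1

/-- Two edges sharing a vertex. -/
def AdjEdges (D : Multigraph) (a b : D.E) : Prop :=
  ∃ v : D.V, (D.src a = v ∨ D.tgt a = v) ∧ (D.src b = v ∨ D.tgt b = v)

/-- The number of incidences of edges of weight `c` at the vertex `u`. -/
def incCount (D : Multigraph) (w : D.E → ℕ) (u : D.V) (c : ℕ) : ℕ :=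
  (Finset.univ.filter fun e : D.E => D.src e = u ∧ w e = c).card +
    (Finset.univ.filter fun e : D.E => D.tgt e = u ∧ w e = c).card

/-- The `π^v`-value of the vertex `u`: the number of incident edges of weight `q + 1`
minus the number of incident edges of weight `q - 1`. -/
def piV (D : Multigraph) (w : D.E → ℕ) (q : ℕ) (u : D.V) : ℤ :=
  (incCount D w u (q + 1) : ℤ) -
    (if q = 0 then 0 else (incCount D w u (q - 1) : ℤ))

/-- The `π^v`-values are balanced: pairwise differences at most one. -/
def BalancedPiV (D : Multigraph) (w : D.E → ℕ) (q : ℕ) : Prop :=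
  ∀ u v : D.V, piV D w q u ≤ piV D w q v + 1

/-- The standard weight `q`, where `m = 3kq + r` with `-3k/2 < r ≤ 3k/2`. -/
def stdWeight (m k : ℕ) : ℕ := (2 * m + 3 * k - 1) / (6 * k)

/-- `w` is a balanced weighting of `D` of total size `m` (the implied weak
subdivision is the generic member of `ℬ_m(D)`). -/
def IsBalancedWeighting (D : Multigraph) (w : D.E → ℕ) (m : ℕ) : Prop :=
  (∑ e : D.E, w e) = m ∧ BalancedWeights w ∧ ZeroAcyclic D w

/-- Every 3-bond of `D` is trivial (consists of the three edges at a single vertex). -/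
def OnlyTrivialThreeBonds (D : Multigraph) : Prop :=
  ∀ F : Finset D.E, D.IsBond F → F.card = 3 →
    ∃ u : D.V, F = Finset.univ.filter fun e => D.src e = u ∨ D.tgt e = u

/-- The 3-dipole: two vertices joined by three parallel edges. -/
def dipole3 : Multigraph where
  V := Fin 2
  E := Fin 3
  src _ := 0
  tgt _ := 1

/-- The complete graph `K₄`. -/
def K4 : Multigraph where
  V := Fin 4
  E := {p : Fin 4 × Fin 4 // p.1 < p.2}
  src p := p.1.1
  tgt p := p.1.2

/-- The complete bipartite graph `K_{3,3}`. -/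
def K33 : Multigraph where
  V := Fin 3 ⊕ Fin 3
  E := Fin 3 × Fin 3
  src p := Sum.inl p.1
  tgt p := Sum.inr p.2

/-- The triangular prism `Π₃`; the edges `Sum.inr i` are the rungs. -/
def prism : Multigraph where
  V := Fin 3 × Bool
  E := (Fin 3 × Bool) ⊕ Fin 3
  src := fun e => match e with
    | Sum.inl (i, b) => (i, b)
    | Sum.inr i => (i, false)
  tgt := fun e => match e with
    | Sum.inl (i, b) => (i + 1, b)
    | Sum.inr i => (i, true)

/-- The Wagner graph (the 4-Möbius ladder): the edges `Sum.inl i` are the rails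
(the 8-cycle) and the edges `Sum.inr j` are the rungs. -/
def wagner : Multigraph where
  V := Fin 8
  E := Fin 8 ⊕ Fin 4
  src := fun e => match e with
    | Sum.inl i => i
    | Sum.inr j => ⟨j.val, by omega⟩
  tgt := fun e => match e with
    | Sum.inl i => i + 1
    | Sum.inr j => ⟨j.val + 4, by omega⟩

/-- The Petersen graph. -/
def petersen : Multigraph where
  V := Fin 5 × Bool
  E := Fin 5 ⊕ Fin 5 ⊕ Fin 5
  src := fun e => match e with
    | Sum.inl i => (i, false)
    | Sum.inr (Sum.inl i) => (i, false)
    | Sum.inr (Sum.inr i) => (i, true)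
  tgt := fun e => match e with
    | Sum.inl i => (i + 1, false)
    | Sum.inr (Sum.inl i) => (i, true)
    | Sum.inr (Sum.inr i) => (i + 2, true)

/-! Order graphs by the numbers `d i` of disconnecting sets of `i` edges: for `p` near `1` the
smallest `i` at which two graphs differ decides which is more reliable, while for `p` near `0` the
numbers of spanning trees decide.

In a graph with 6 vertices and 11 edges that is not 3-edge-connected, `d 2 > 0`. In a
3-edge-connected one, `d i = 0` for `i < 3`, `d 3` is the number `c₃` of cuts with 3 edges and
`d 4 = 8 * c₃ + c₄`, because two distinct 3-edge cuts cannot lie in a common set of 4 edges. The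
degree sum is at most 22, so at least two vertices have degree 3. If `c₃ = 2` and `c₄ ≤ 4`, then
exactly two vertices have degree 3, the other four have degree 4, and these six stars are all the
cuts with at most 4 edges. Hence the pairs of vertices have cuts with at least 5 edges, which
forbids parallel edges and an edge between the two vertices of degree 3. The complement therefore
has degrees `2, 2, 1, 1, 1, 1` with the two vertices of degree 2 adjacent, so it is `P₄ ∪ K₂`, and
the complement of `P₄ ∪ K₂` attains these values of `c₃` and `c₄`. The complement of `P₃ ∪ P₃` has
one more spanning tree. -/

section Cardinality

variable {α : Type*}

theorem card_symmDiff_add_two_mul_card_inter (s t : Finset α) :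
    #(symmDiff s t) + 2 * #(s ∩ t) = #s + #t := by
  have hst := card_sdiff_add_card_inter s t
  have hts := card_sdiff_add_card_inter t s
  rw [inter_comm] at hts
  rw [symmDiff, sup_eq_union, card_union_of_disjoint disjoint_sdiff_sdiff]
  omega

theorem card_symmDiff_add_card_add_card (s t : Finset α) :
    #(symmDiff s t) + #s + #t = 2 * #(s ∪ t) := by
  have hsymm := card_symmDiff_add_two_mul_card_inter s t
  have hunion := card_union_add_card_inter s t
  omega

theorem card_filter_subset_and_card_eq_succ [Fintype α] (s : Finset α) :
    #{t | s ⊆ t ∧ #t = #s + 1} = Fintype.card α - #s := by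
  have himage : ({t | s ⊆ t ∧ #t = #s + 1} : Finset (Finset α)) = sᶜ.image (insert · s) := by
    ext t
    simp only [mem_filter_univ, mem_image, mem_compl]
    rw [← covBy_iff_exists_insert, covBy_iff_card_sdiff_eq_one]
    refine and_congr_right fun hst => ?_
    have := card_sdiff_add_card_eq_card hst
    omega
  rw [himage, card_image_of_injOn, card_compl]
  exact fun a ha b _ => (insert_inj (mem_compl.1 ha)).1

end Cardinality

namespace Multigraph

section Cuts

variable {G : Multigraph} {A B : Finset G.V} {C D F S : Finset G.E} {i j k : ℕ}

theorem mem_cutEdges {e : G.E} :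
    e ∈ G.cutEdges A ↔ (G.src e ∈ A ∧ G.tgt e ∉ A) ∨ (G.src e ∉ A ∧ G.tgt e ∈ A) := by
  simp only [cutEdges, mem_filter_univ]

theorem isCut_cutEdges (hne : A.Nonempty) (hA : A ≠ univ) : G.IsCut (G.cutEdges A) :=
  ⟨A, hne, hA, rfl⟩

theorem cutEdges_compl (A : Finset G.V) : G.cutEdges Aᶜ = G.cutEdges A := by
  ext e
  simp only [mem_cutEdges, mem_compl]
  tauto

theorem cutEdges_symmDiff (A B : Finset G.V) :
    G.cutEdges (symmDiff A B) = symmDiff (G.cutEdges A) (G.cutEdges B) := by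
  ext e
  simp only [mem_cutEdges, mem_symmDiff]
  tauto

theorem IsCut.symmDiff (hC : G.IsCut C) (hD : G.IsCut D) (h : C ≠ D) :
    G.IsCut (symmDiff C D) := by
  obtain ⟨A, -, -, rfl⟩ := hC
  obtain ⟨B, -, -, rfl⟩ := hD
  rw [← cutEdges_symmDiff]
  refine isCut_cutEdges ?_ fun huniv => h ?_
  · rw [symmDiff_nonempty]
    rintro rfl
    exact h rfl
  · rw [((symmDiff_eq_top A B).1 huniv).eq_compl, cutEdges_compl]

theorem stepOn_mem_iff_of_disjoint_cutEdges {u v : G.V} (hd : Disjoint S (G.cutEdges A))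
    (h : G.stepOn S u v) : u ∈ A ↔ v ∈ A := by
  obtain ⟨e, he, huv⟩ := h
  have hcut := disjoint_left.1 hd he
  rw [mem_cutEdges] at hcut
  rcases huv with ⟨rfl, rfl⟩ | ⟨rfl, rfl⟩ <;> tauto

theorem connOn_iff_forall_isCut :
    G.ConnOn S ↔ ∀ C, G.IsCut C → ¬ Disjoint S C := by
  constructor
  · rintro h _ ⟨A, ⟨u, hu⟩, hA, rfl⟩ hd
    refine hA (eq_univ_of_forall fun v => ?_)
    induction h u v with
    | refl => exact hu
    | tail _ hstep ih => exact (stepOn_mem_iff_of_disjoint_cutEdges hd hstep).1 ih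
  · intro h u v
    by_contra hv
    let A : Finset G.V := {x | Relation.ReflTransGen (G.stepOn S) u x}
    have hu : u ∈ A := (mem_filter_univ u).2 .refl
    refine h _ (isCut_cutEdges ⟨u, hu⟩ fun hA => ?_) ?_
    · exact hv ((mem_filter_univ v).1 (eq_univ_iff_forall.1 hA v))
    · refine disjoint_left.2 fun e he hcut => ?_
      simp only [mem_cutEdges, A, mem_filter_univ] at hcut
      rcases hcut with ⟨hsrc, htgt⟩ | ⟨hsrc, htgt⟩
      · exact htgt (hsrc.tail ⟨e, he, Or.inl ⟨rfl, rfl⟩⟩)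
      · exact hsrc (htgt.tail ⟨e, he, Or.inr ⟨rfl, rfl⟩⟩)

theorem disconnects_iff_exists_isCut : G.Disconnects F ↔ ∃ C ⊆ F, G.IsCut C := by
  simp only [Disconnects, connOn_iff_forall_isCut, ← compl_eq_univ_sdiff, not_forall, not_not,
    disjoint_compl_left_iff, exists_prop, and_comm]

/-- `G` is `k`-edge-connected: every cut has at least `k` edges. -/
def IsEdgeConnected (G : Multigraph) (k : ℕ) : Prop := ∀ C, G.IsCut C → k ≤ #C

/-- The number of cuts of `G` with exactly `i` edges; minimality of the cuts is not required. -/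
def cutCount (G : Multigraph) (i : ℕ) : ℕ := #{C : Finset G.E | #C = i ∧ G.IsCut C}

theorem IsEdgeConnected.mono (h : G.IsEdgeConnected k) (hj : j ≤ k) : G.IsEdgeConnected j :=
  fun C hC => hj.trans (h C hC)

theorem IsEdgeConnected.le_card_cutEdges (h : G.IsEdgeConnected k) (hne : A.Nonempty)
    (hA : A ≠ univ) : k ≤ #(G.cutEdges A) :=
  h _ (isCut_cutEdges hne hA)

theorem IsEdgeConnected.connected (h : G.IsEdgeConnected 1) : G.Connected :=
  connOn_iff_forall_isCut.2 fun C hC hd =>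
    (card_pos.1 (h C hC)).ne_empty (disjoint_self.1 (hd.mono_left (subset_univ C)))

theorem IsEdgeConnected.cutEdges_eq_cutEdges_iff (h : G.IsEdgeConnected 1) :
    G.cutEdges A = G.cutEdges B ↔ A = B ∨ A = Bᶜ := by
  refine ⟨fun hAB => ?_, ?_⟩
  · by_contra! hne
    have hcut : G.IsCut (G.cutEdges (symmDiff A B)) := by
      refine isCut_cutEdges (symmDiff_nonempty.2 hne.1) fun huniv => hne.2 ?_
      exact ((symmDiff_eq_top A B).1 huniv).eq_compl
    have := h _ hcut
    simp [cutEdges_symmDiff, hAB] at this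
  · rintro (rfl | rfl)
    · rfl
    · exact cutEdges_compl B

theorem IsEdgeConnected.card_add_card_add_le (h : G.IsEdgeConnected k) (hC : G.IsCut C)
    (hD : G.IsCut D) (hne : C ≠ D) (hCF : C ⊆ F) (hDF : D ⊆ F) : #C + #D + k ≤ 2 * #F := by
  have hsymm := h _ (hC.symmDiff hD hne)
  have hcard := card_symmDiff_add_card_add_card C D
  have hunion := card_le_card (union_subset hCF hDF)
  omega

theorem d_pos_of_isCut (hC : G.IsCut C) (hCi : #C ≤ i) (hi : i ≤ G.nE) : 0 < G.d i := by
  obtain ⟨F, hCF, rfl⟩ := exists_superset_card_eq hCi hi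
  exact card_pos.2 ⟨F, by simpa using disconnects_iff_exists_isCut.2 ⟨C, hCF, hC⟩⟩

theorem IsEdgeConnected.d_eq_zero (h : G.IsEdgeConnected k) (hi : i < k) : G.d i = 0 := by
  refine card_eq_zero.2 (filter_eq_empty_iff.2 ?_)
  rintro F - ⟨rfl, hF⟩
  obtain ⟨C, hCF, hC⟩ := disconnects_iff_exists_isCut.1 hF
  exact (hi.trans_le (h C hC)).not_ge (card_le_card hCF)

theorem IsEdgeConnected.d_eq_cutCount (h : G.IsEdgeConnected k) : G.d k = G.cutCount k := by
  refine congrArg card (filter_congr fun F _ => and_congr_right ?_)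
  rintro rfl
  refine disconnects_iff_exists_isCut.trans ⟨?_, fun hF => ⟨F, Subset.rfl, hF⟩⟩
  rintro ⟨C, hCF, hC⟩
  rwa [← eq_of_subset_of_card_le hCF (h C hC)]

/-- Since the symmetric difference of two distinct cuts is a cut, a set of `k + 1` edges containing
two cuts with `k` edges would satisfy `3 * k ≤ 2 * (k + 1)`. -/
theorem IsEdgeConnected.card_filter_exists_isCut_subset (h : G.IsEdgeConnected k) (hk : 3 ≤ k) :
    #{F : Finset G.E | #F = k + 1 ∧ ∃ C ⊆ F, #C = k ∧ G.IsCut C} =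
      G.cutCount k * (G.nE - k) := by
  rw [cutCount, ← mul_one (card _)]
  refine (card_mul_eq_card_mul (· ⊆ ·) (fun C hCmem => ?_) fun F hFmem => ?_).symm
  · obtain ⟨rfl, hC⟩ := (mem_filter_univ C).1 hCmem
    rw [nE, ← card_filter_subset_and_card_eq_succ]
    congr 1
    ext F
    simp only [mem_bipartiteAbove, mem_filter_univ]
    exact ⟨fun hF => ⟨hF.2, hF.1.1⟩, fun hF => ⟨⟨hF.2, C, hF.1, rfl, hC⟩, hF.1⟩⟩
  · obtain ⟨hFk, C, hCF, hCk, hC⟩ := (mem_filter_univ F).1 hFmem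
    refine card_eq_one.2 ⟨C, eq_singleton_iff_unique_mem.2 ⟨?_, fun D hD => ?_⟩⟩
    · exact (mem_bipartiteBelow _).2 ⟨(mem_filter_univ C).2 ⟨hCk, hC⟩, hCF⟩
    · rw [mem_bipartiteBelow, mem_filter_univ] at hD
      by_contra hne
      have := h.card_add_card_add_le hD.1.2 hC hne hD.2 hCF
      omega

theorem IsEdgeConnected.d_succ_eq (h : G.IsEdgeConnected k) (hk : 3 ≤ k) :
    G.d (k + 1) = G.cutCount k * (G.nE - k) + G.cutCount (k + 1) := by
  rw [← h.card_filter_exists_isCut_subset hk, cutCount, ← card_union_of_disjoint]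
  · refine congrArg card ?_
    ext F
    simp only [mem_filter_univ, mem_union, disconnects_iff_exists_isCut, ← and_or_left]
    refine and_congr_right fun hFk => ⟨?_, ?_⟩
    · rintro ⟨C, hCF, hC⟩
      obtain rfl | hssub := hCF.eq_or_ssubset
      · exact Or.inr hC
      · have := card_lt_card hssub
        have := h C hC
        exact Or.inl ⟨C, hCF, by omega, hC⟩
    · rintro (⟨C, hCF, -, hC⟩ | hF)
      exacts [⟨C, hCF, hC⟩, ⟨F, Subset.rfl, hF⟩]
  · simp only [disjoint_left, mem_filter_univ]
    rintro F ⟨hFk, C, hCF, hCk, hC⟩ ⟨-, hF⟩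
    have hne : C ≠ F := by rintro rfl; omega
    have := h.card_add_card_add_le hC hF hne hCF Subset.rfl
    omega

end Cuts

end Multigraph

section PowerSums

theorem mul_sum_range_mul_pow_lt_one {M t : ℝ} (ht : 0 < t) (hMt : (M + 1) * t ≤ 1) (n : ℕ) :
    t * ∑ i ∈ range n, M * t ^ i < 1 := by
  suffices t * ∑ i ∈ range n, M * t ^ i ≤ 1 - t ^ n from
    this.trans_lt (sub_lt_self 1 (pow_pos ht n))
  induction n with
  | zero => simp
  | succ n ih =>
    rw [sum_range_succ, mul_add]
    have := mul_le_mul_of_nonneg_right hMt (pow_nonneg ht.le n)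
    linear_combination ih + this

theorem sum_mul_pow_lt_sum_mul_pow {a b : ℕ → ℕ} {M k m : ℕ} {t : ℝ} (ht : 0 < t)
    (hMt : (M + 1) * t ≤ 1) (ha : ∀ i, a i ≤ M) (hlt : ∀ i < k, a i ≤ b i) (hk : a k < b k)
    (hkm : k ≤ m) :
    ∑ i ∈ range (m + 1), a i * t ^ i < ∑ i ∈ range (m + 1), b i * t ^ i := by
  obtain ⟨r, rfl⟩ := Nat.exists_eq_add_of_le hkm
  have hhead : ∑ i ∈ range k, a i * t ^ i ≤ ∑ i ∈ range k, b i * t ^ i := by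
    gcongr with i hi
    exact_mod_cast hlt i (mem_range.1 hi)
  have hmid : (a k + 1 : ℝ) * t ^ k ≤ b k * t ^ k := by
    gcongr
    exact_mod_cast hk
  have htail : ∑ i ∈ range r, a (k + 1 + i) * t ^ (k + 1 + i) < t ^ k := by
    calc ∑ i ∈ range r, a (k + 1 + i) * t ^ (k + 1 + i)
        ≤ ∑ i ∈ range r, M * t ^ (k + 1 + i) := by
          gcongr with i
          exact_mod_cast ha _
      _ = t ^ k * (t * ∑ i ∈ range r, M * t ^ i) := by
          simp only [mul_sum]
          exact sum_congr rfl fun i _ => by ring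
      _ < t ^ k := mul_lt_of_lt_one_right (pow_pos ht k) (mul_sum_range_mul_pow_lt_one ht hMt r)
  calc ∑ i ∈ range (k + r + 1), a i * t ^ i
      = ∑ i ∈ range k, a i * t ^ i + a k * t ^ k +
          ∑ i ∈ range r, a (k + 1 + i) * t ^ (k + 1 + i) := by
        rw [add_right_comm, sum_range_add, sum_range_succ]
    _ < ∑ i ∈ range (k + 1), b i * t ^ i := by
        rw [sum_range_succ]
        linarith
    _ ≤ ∑ i ∈ range (k + r + 1), b i * t ^ i := by
        gcongr

theorem mul_div_one_sub_le_one {M p : ℝ} (hp : p < 1) (h : (M + 2) * p ≤ 1) :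
    (M + 1) * (p / (1 - p)) ≤ 1 := by
  rw [← mul_div_assoc, div_le_one (sub_pos.2 hp)]
  linarith

theorem sum_ite_pow_card {α : Type*} [Fintype α] (P : Finset α → Prop) (x : ℝ) {y : ℝ}
    (hy : y ≠ 0) :
    (∑ S, if P S then x ^ #S * y ^ (Fintype.card α - #S) else 0) =
      y ^ Fintype.card α *
        ∑ i ∈ range (Fintype.card α + 1), #{S : Finset α | #S = i ∧ P S} * (x / y) ^ i := by
  rw [← sum_filter, mul_sum, ← sum_fiberwise_of_maps_to (t := range (Fintype.card α + 1))
    (g := card) fun S _ => mem_range_succ_iff.2 (card_le_univ S)]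
  refine sum_congr rfl fun i hi => ?_
  rw [sum_congr rfl (g := fun _ => y ^ Fintype.card α * (x / y) ^ i), sum_const, filter_filter,
    nsmul_eq_mul, filter_congr fun S _ => and_comm]
  · ring
  · intro S hS
    rw [(mem_filter.1 hS).2, div_pow, pow_sub₀ _ hy (mem_range_succ_iff.1 hi)]
    ring

end PowerSums

namespace Multigraph

section Reliability

variable {G H : Multigraph} {i k : ℕ} {p : ℝ}

/-- The number of connected spanning subgraphs of `G` with exactly `i` edges. -/
def connCount (G : Multigraph) (i : ℕ) : ℕ := #{S : Finset G.E | #S = i ∧ G.ConnOn S}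

theorem card_filter_card_eq_and_le_two_pow (P : Finset G.E → Prop) (i : ℕ) :
    #{S | #S = i ∧ P S} ≤ 2 ^ G.nE := by
  rw [nE, ← Fintype.card_finset]
  exact card_le_univ _

theorem le_nE_of_card_filter_pos {P : Finset G.E → Prop} (h : 0 < #{S | #S = i ∧ P S}) :
    i ≤ G.nE := by
  obtain ⟨S, hS⟩ := card_pos.1 h
  rw [mem_filter_univ] at hS
  exact hS.1 ▸ card_le_univ S

theorem rel_eq_sum_connCount (hp : p ≠ 1) :
    G.rel p = (1 - p) ^ G.nE * ∑ i ∈ range (G.nE + 1), G.connCount i * (p / (1 - p)) ^ i :=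
  sum_ite_pow_card G.ConnOn p (sub_ne_zero.2 hp.symm)

theorem one_sub_rel_eq_sum_d (hp : p ≠ 0) :
    1 - G.rel p = p ^ G.nE * ∑ i ∈ range (G.nE + 1), G.d i * ((1 - p) / p) ^ i := by
  refine Eq.trans ?_ (sum_ite_pow_card G.Disconnects (1 - p) hp)
  rw [sub_eq_iff_eq_add, ← compl_bijective.sum_comp, rel, ← sum_add_distrib]
  trans ∑ S : Finset G.E, p ^ #S * (1 - p) ^ (Fintype.card G.E - #S)
  · rw [Fintype.sum_pow_mul_eq_add_pow, add_sub_cancel, one_pow]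
  · refine sum_congr rfl fun S _ => ?_
    simp only [Disconnects, ← compl_eq_univ_sdiff, compl_compl, card_compl, nE,
      Nat.sub_sub_self (card_le_univ S)]
    split_ifs <;> ring

theorem rel_lt_rel_of_connCount (hE : G.nE = H.nE) (hp : 0 < p) (hp' : (2 ^ G.nE + 2) * p ≤ 1)
    (hlt : ∀ i < k, G.connCount i ≤ H.connCount i) (hk : G.connCount k < H.connCount k) :
    G.rel p < H.rel p := by
  have hp1 : p < 1 := by nlinarith [pow_pos (two_pos (α := ℝ)) G.nE]
  rw [rel_eq_sum_connCount hp1.ne, rel_eq_sum_connCount hp1.ne, ← hE]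
  refine mul_lt_mul_of_pos_left ?_ (pow_pos (sub_pos.2 hp1) _)
  refine sum_mul_pow_lt_sum_mul_pow (M := 2 ^ G.nE) (div_pos hp (sub_pos.2 hp1)) ?_
    (card_filter_card_eq_and_le_two_pow _) hlt hk
    (hE ▸ le_nE_of_card_filter_pos (Nat.zero_lt_of_lt hk))
  exact_mod_cast mul_div_one_sub_le_one hp1 hp'

theorem rel_lt_rel_of_d (hE : G.nE = H.nE) (hp : p < 1) (hp' : (2 ^ G.nE + 2) * (1 - p) ≤ 1)
    (hlt : ∀ i < k, G.d i ≤ H.d i) (hk : G.d k < H.d k) : H.rel p < G.rel p := by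
  have hp0 : 0 < p := by nlinarith [pow_pos (two_pos (α := ℝ)) G.nE]
  rw [← sub_lt_sub_iff_left (1 : ℝ), one_sub_rel_eq_sum_d hp0.ne', one_sub_rel_eq_sum_d hp0.ne',
    ← hE]
  refine mul_lt_mul_of_pos_left ?_ (pow_pos hp0 _)
  refine sum_mul_pow_lt_sum_mul_pow (M := 2 ^ G.nE) (div_pos (sub_pos.2 hp) hp0) ?_
    (card_filter_card_eq_and_le_two_pow _) hlt hk
    (hE ▸ le_nE_of_card_filter_pos (Nat.zero_lt_of_lt hk))
  simpa using mul_div_one_sub_le_one (sub_lt_self 1 hp0) hp'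

theorem stepOn_symm {S : Finset G.E} {u v : G.V} (h : G.stepOn S u v) : G.stepOn S v u := by
  obtain ⟨e, he, h⟩ := h
  exact ⟨e, he, h.symm⟩

/-- The simple graph on the vertices of `G` whose edges are the pairs joined by an edge in `S`. -/
def simpleGraphOn (G : Multigraph) (S : Finset G.E) : SimpleGraph G.V :=
  SimpleGraph.fromRel (G.stepOn S)

theorem simpleGraphOn_adj {S : Finset G.E} {u v : G.V} :
    (G.simpleGraphOn S).Adj u v ↔ u ≠ v ∧ G.stepOn S u v := by
  rw [simpleGraphOn, SimpleGraph.fromRel_adj, or_iff_left_of_imp stepOn_symm]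

theorem card_edgeSet_simpleGraphOn_le (S : Finset G.E) :
    Nat.card (G.simpleGraphOn S).edgeSet ≤ #S := by
  have hsub : (G.simpleGraphOn S).edgeSet ⊆ S.image fun e => s(G.src e, G.tgt e) := by
    rintro ⟨u, v⟩ huv
    obtain ⟨e, he, h⟩ := (simpleGraphOn_adj.1 huv).2
    exact mem_coe.2 (mem_image.2 ⟨e, he, Sym2.eq_iff.2 h⟩)
  calc Nat.card (G.simpleGraphOn S).edgeSet
      ≤ Nat.card (S.image fun e => s(G.src e, G.tgt e) : Set (Sym2 G.V)) :=
        Nat.card_mono (finite_toSet _) hsub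
    _ ≤ #S := by
        rw [Nat.card_coe_set_eq, Set.ncard_coe_finset]
        exact card_image_le

theorem ConnOn.preconnected_simpleGraphOn {S : Finset G.E} (h : G.ConnOn S) :
    (G.simpleGraphOn S).Preconnected := by
  intro u v
  induction h u v with
  | refl => rfl
  | @tail v w _ hstep ih =>
    obtain rfl | hne := eq_or_ne v w
    · exact ih
    · exact ih.trans (simpleGraphOn_adj.2 ⟨hne, hstep⟩).reachable

theorem ConnOn.nV_le {S : Finset G.E} (h : G.ConnOn S) : G.nV ≤ #S + 1 := by
  obtain hV | hV := isEmpty_or_nonempty G.V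
  · simp [nV]
  · rw [nV, ← Nat.card_eq_fintype_card]
    have hconn : (G.simpleGraphOn S).Connected := ⟨h.preconnected_simpleGraphOn⟩
    exact hconn.card_vert_le_card_edgeSet_add_one.trans
      (Nat.succ_le_succ (card_edgeSet_simpleGraphOn_le S))

theorem connCount_eq_zero (hi : i + 1 < G.nV) : G.connCount i = 0 := by
  refine card_eq_zero.2 (filter_eq_empty_iff.2 ?_)
  rintro S - ⟨rfl, hS⟩
  exact hi.not_ge hS.nV_le

theorem treeCount_eq_connCount (hi : i + 1 = G.nV) : G.treeCount = G.connCount i := by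
  simp only [treeCount, connCount, ← hi, add_left_inj]

theorem rel_lt_rel_of_treeCount (hV : G.nV = H.nV) (hE : G.nE = H.nE)
    (hT : G.treeCount < H.treeCount) (hp : 0 < p) (hp' : (2 ^ G.nE + 2) * p ≤ 1) :
    G.rel p < H.rel p := by
  obtain ⟨F, hF⟩ := card_pos.1 (Nat.zero_lt_of_lt hT)
  obtain ⟨hFk, -⟩ := (mem_filter_univ F).1 hF
  rw [treeCount_eq_connCount (hFk.trans hV.symm), treeCount_eq_connCount hFk] at hT
  exact rel_lt_rel_of_connCount hE hp hp'
    (fun i hi => (connCount_eq_zero (by omega)).trans_le (Nat.zero_le _)) hT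

end Reliability

end Multigraph

section Isomorphism

variable {G H : Multigraph} {n m : ℕ} {p q : ℝ}

theorem MGIso.stepOn_map_iff (φ : MGIso G H) {S : Finset G.E} {u v : G.V} :
    H.stepOn (S.map φ.eMap.toEmbedding) (φ.vMap u) (φ.vMap v) ↔ G.stepOn S u v := by
  simp only [Multigraph.stepOn, mem_map_equiv, ← φ.eMap.exists_congr_right, Equiv.symm_apply_apply]
  refine exists_congr fun e => and_congr_right fun _ => ?_
  rcases φ.ends_eq e with ⟨hsrc, htgt⟩ | ⟨hsrc, htgt⟩ <;>
    simp only [hsrc, htgt, EmbeddingLike.apply_eq_iff_eq, or_comm, and_comm]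

theorem MGIso.connOn_map_iff (φ : MGIso G H) {S : Finset G.E} :
    H.ConnOn (S.map φ.eMap.toEmbedding) ↔ G.ConnOn S := by
  simp only [Multigraph.ConnOn, φ.vMap.surjective.forall]
  refine forall₂_congr fun u v => ⟨fun h => ?_, fun h => ?_⟩
  · have hlift := h.lift φ.vMap.symm (p := G.stepOn S) fun a b hab =>
      φ.stepOn_map_iff.1 (by simpa only [φ.vMap.apply_symm_apply] using hab)
    simpa only [Function.onFun, φ.vMap.symm_apply_apply] using hlift
  · exact h.lift φ.vMap fun a b => φ.stepOn_map_iff.2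

theorem IsIso.rel_eq (h : IsIso G H) (p : ℝ) : G.rel p = H.rel p := by
  obtain ⟨φ⟩ := h
  refine Fintype.sum_equiv φ.eMap.finsetCongr _ _ fun S => ?_
  simp only [Equiv.finsetCongr_apply, card_map, φ.connOn_map_iff, Multigraph.nE,
    Fintype.card_congr φ.eMap]

theorem Multigraph.IsSimple.isIso_of_equiv (hG : G.IsSimple) (hE : G.nE = H.nE) (σ : G.V ≃ H.V)
    (h : ∀ e : G.E, ∃ f : H.E, (H.src f = σ (G.src e) ∧ H.tgt f = σ (G.tgt e)) ∨
      (H.src f = σ (G.tgt e) ∧ H.tgt f = σ (G.src e))) :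
    IsIso G H := by
  choose f hf using h
  have hinj : Function.Injective f := by
    intro e e' hee'
    have he := hf e
    have he' := hf e'
    rw [← hee'] at he'
    apply hG.2
    rcases he with ⟨hsrc, htgt⟩ | ⟨hsrc, htgt⟩ <;> rw [hsrc, htgt] at he' <;>
      simp only [EmbeddingLike.apply_eq_iff_eq] at he' <;> tauto
  exact ⟨σ, Equiv.ofBijective f ((Fintype.bijective_iff_injective_and_card f).2 ⟨hinj, hE⟩), hf⟩

theorem UniquelyOptimal.pOptimal (h : UniquelyOptimal H n m) (hp0 : 0 < p) (hp1 : p < 1) :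
    pOptimal H n m p := by
  refine ⟨h.1, fun K hK => ?_⟩
  by_cases hiso : IsIso H K
  · exact (hiso.rel_eq p).ge
  · exact (h.2 K hK hiso p hp0 hp1).le

theorem not_exists_uniquelyOptimal (hp0 : 0 < p) (hp1 : p < 1)
    (hG : ∀ K, pOptimal K n m p → IsIso G K) (hq0 : 0 < q) (hq1 : q < 1) (hH : memG H n m)
    (hlt : G.rel q < H.rel q) : ¬ ∃ K, UniquelyOptimal K n m := by
  rintro ⟨K, hK⟩
  refine hlt.not_ge ?_
  rw [(hG K (hK.pOptimal hp0 hp1)).rel_eq q]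
  exact (hK.pOptimal hq0 hq1).2 H hH

end Isomorphism

section Sequences

variable {V : Type*} [Fintype V] {f : V → ℕ} {k : ℕ}

theorem eq_or_eq_succ_of_sum_add_card_le (hk : ∀ v, k ≤ f v)
    (hsum : ∑ v, f v + #{v | f v = k} ≤ Fintype.card V * (k + 1)) (v : V) :
    f v = k ∨ f v = k + 1 := by
  have hle : ∀ v ∈ univ, k + 1 ≤ f v + if f v = k then 1 else 0 := by
    intro v _
    have := hk v
    split_ifs <;> omega
  have heq := (sum_eq_sum_iff_of_le hle).1 (le_antisymm (sum_le_sum hle) ?_) v (mem_univ v)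
  · split_ifs at heq <;> omega
  · rwa [sum_add_distrib, ← card_filter, sum_const, card_univ, smul_eq_mul]

theorem sum_add_card_eq (hf : ∀ v, f v = k ∨ f v = k + 1) :
    ∑ v, f v + #{v | f v = k} = Fintype.card V * (k + 1) := by
  rw [card_filter, ← sum_add_distrib, ← card_univ, ← smul_eq_mul, ← sum_const]
  refine sum_congr rfl fun v _ => ?_
  rcases hf v with h | h <;> simp [h]

end Sequences

namespace Multigraph

section Stars

variable {G : Multigraph} {k : ℕ} {e : G.E} {u v : G.V}

theorem mem_cutEdges_singleton :
    e ∈ G.cutEdges {v} ↔ (G.src e = v ∧ G.tgt e ≠ v) ∨ (G.src e ≠ v ∧ G.tgt e = v) := by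
  simp only [mem_cutEdges, mem_singleton]

theorem cutEdges_pair (huv : u ≠ v) :
    G.cutEdges {u, v} = symmDiff (G.cutEdges {u}) (G.cutEdges {v}) := by
  rw [← cutEdges_symmDiff, insert_eq]
  exact congrArg G.cutEdges ((symmDiff_eq_sup _ _).2 (disjoint_singleton.2 huv)).symm

theorem sum_card_cutEdges_singleton_le (G : Multigraph) :
    ∑ v, #(G.cutEdges {v}) ≤ 2 * G.nE := by
  calc ∑ v, #(G.cutEdges {v})
      = ∑ e, #{v | e ∈ G.cutEdges {v}} := by
        simpa [bipartiteAbove, bipartiteBelow] using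
          sum_card_bipartiteAbove_eq_sum_card_bipartiteBelow (s := univ) (t := univ)
            fun v e => e ∈ G.cutEdges {v}
    _ ≤ ∑ e, #{G.src e, G.tgt e} := by
        gcongr with e
        intro v hv
        simp only [mem_filter_univ, mem_cutEdges_singleton] at hv
        simp only [mem_insert, mem_singleton]
        tauto
    _ ≤ 2 * G.nE := by
        rw [mul_comm]
        exact sum_le_card_nsmul _ _ _ fun e _ => card_le_two

theorem IsEdgeConnected.card_filter_le_cutCount (h : G.IsEdgeConnected 1) (i : ℕ) :
    #{A | A.Nonempty ∧ 2 * #A < G.nV ∧ #(G.cutEdges A) = i} ≤ G.cutCount i := by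
  refine card_le_card_of_injOn G.cutEdges (fun A hA => ?_) fun A hA B hB hAB => ?_
  · obtain ⟨hne, hcard, hcut⟩ := (mem_filter_univ A).1 hA
    refine (mem_filter_univ _).2 ⟨hcut, isCut_cutEdges hne ?_⟩
    rintro rfl
    rw [card_univ, nV] at hcard
    omega
  · refine (h.cutEdges_eq_cutEdges_iff.1 hAB).resolve_right ?_
    rintro rfl
    have hBcard := ((mem_filter_univ B).1 hB).2.1
    have hAcard := ((mem_filter_univ _).1 hA).2.1
    rw [card_compl] at hAcard
    rw [nV] at *
    omega

theorem IsEdgeConnected.card_star_add_card_pair_le_cutCount (h : G.IsEdgeConnected 1)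
    (hV : 4 < G.nV) (i : ℕ) :
    #{v | #(G.cutEdges {v}) = i} + #{A | #A = 2 ∧ #(G.cutEdges A) = i} ≤ G.cutCount i := by
  rw [← card_map ⟨_, singleton_injective⟩, ← card_union_of_disjoint]
  · refine (card_le_card (union_subset ?_ ?_)).trans (h.card_filter_le_cutCount i)
    · intro A hA
      obtain ⟨v, hv, rfl⟩ := mem_map.1 hA
      have hcut := (mem_filter_univ v).1 hv
      simp only [Function.Embedding.coeFn_mk, mem_filter_univ, singleton_nonempty, card_singleton]
      exact ⟨trivial, by omega, hcut⟩
    · refine monotone_filter_right _ fun A _ hA => ?_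
      exact ⟨card_pos.1 (by omega), by omega, hA.2⟩
  · refine disjoint_left.2 fun A hA hA' => ?_
    obtain ⟨v, -, rfl⟩ := mem_map.1 hA
    simp at hA'

theorem simpleGraphOn_univ_adj :
    (G.simpleGraphOn univ).Adj u v ↔ u ≠ v ∧ (G.cutEdges {u} ∩ G.cutEdges {v}).Nonempty := by
  rw [simpleGraphOn_adj]
  refine and_congr_right fun huv => exists_congr fun e => ?_
  simp only [mem_univ, true_and, mem_inter, mem_cutEdges_singleton]
  grind

theorem degree_simpleGraphOn_univ
    (hsimple : ∀ u v, u ≠ v → #(G.cutEdges {u} ∩ G.cutEdges {v}) ≤ 1) (v : G.V) :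
    (G.simpleGraphOn univ).degree v = #(G.cutEdges {v}) := by
  have hunion : G.cutEdges {v} = ((G.simpleGraphOn univ).neighborFinset v).biUnion
      fun u => G.cutEdges {v} ∩ G.cutEdges {u} := by
    ext e
    simp only [mem_biUnion, SimpleGraph.mem_neighborFinset, simpleGraphOn_univ_adj, mem_inter]
    refine ⟨fun he => ?_, fun ⟨_, _, he, _⟩ => he⟩
    suffices ∃ u, v ≠ u ∧ e ∈ G.cutEdges {u} from
      this.imp fun u hu => ⟨⟨hu.1, e, mem_inter.2 ⟨he, hu.2⟩⟩, he, hu.2⟩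
    simp only [mem_cutEdges_singleton] at he ⊢
    rcases he with ⟨rfl, hne⟩ | ⟨hne, rfl⟩
    · exact ⟨G.tgt e, hne.symm, Or.inr ⟨hne.symm, rfl⟩⟩
    · exact ⟨G.src e, hne.symm, Or.inl ⟨rfl, hne.symm⟩⟩
  rw [hunion, card_biUnion, sum_congr rfl (g := fun _ => 1), sum_const, smul_eq_mul, mul_one,
    SimpleGraph.card_neighborFinset_eq_degree]
  · intro u hu
    rw [SimpleGraph.mem_neighborFinset, simpleGraphOn_univ_adj] at hu
    exact le_antisymm (hsimple v u hu.1) (card_pos.2 hu.2)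
  · intro u hu w hw huw
    rw [mem_coe, SimpleGraph.mem_neighborFinset, simpleGraphOn_univ_adj] at hu hw
    refine disjoint_left.2 fun e heu hew => ?_
    simp only [mem_inter, mem_cutEdges_singleton] at heu hew
    grind

theorem IsEdgeConnected.card_star_eq (h : G.IsEdgeConnected k) (hk : 1 ≤ k) (hV : 4 < G.nV)
    {c : ℕ} (hE : 2 * G.nE + c ≤ G.nV * (k + 1)) (hc : G.cutCount k ≤ c) :
    (∀ v, #(G.cutEdges {v}) = k ∨ #(G.cutEdges {v}) = k + 1) ∧
      #{v | #(G.cutEdges {v}) = k} = c := by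
  have hstars := (h.mono hk).card_star_add_card_pair_le_cutCount hV k
  have hsum := G.sum_card_cutEdges_singleton_le
  have hcut (v : G.V) : k ≤ #(G.cutEdges {v}) := by
    refine h.le_card_cutEdges (singleton_nonempty v) fun hv => ?_
    have := congrArg card hv
    rw [card_singleton, card_univ, ← nV] at this
    omega
  have hf := eq_or_eq_succ_of_sum_add_card_le hcut (by rw [← nV]; omega)
  have hcard := sum_add_card_eq hf
  rw [← nV] at hcard
  exact ⟨hf, by omega⟩

theorem IsEdgeConnected.le_cutCount (h : G.IsEdgeConnected k) (hk : 1 ≤ k) (hV : 4 < G.nV)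
    {c : ℕ} (hE : 2 * G.nE + c ≤ G.nV * (k + 1)) : c ≤ G.cutCount k := by
  by_contra! hc
  have hstars := (h.mono hk).card_star_add_card_pair_le_cutCount hV k
  rw [(h.card_star_eq hk hV hE hc.le).2] at hstars
  omega

/-- Under these bounds the single vertices already account for all cuts of size `k` and `k + 1`. -/
theorem IsEdgeConnected.le_card_cutEdges_pair (h : G.IsEdgeConnected k) (hk : 1 ≤ k)
    (hV : 4 < G.nV) {c : ℕ} (hE : 2 * G.nE + c ≤ G.nV * (k + 1)) (hc : G.cutCount k ≤ c)
    (hc' : G.cutCount (k + 1) + c ≤ G.nV) (huv : u ≠ v) : k + 2 ≤ #(G.cutEdges {u, v}) := by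
  obtain ⟨hstar, hcard⟩ := h.card_star_eq hk hV hE hc
  have hcard' : #{v | #(G.cutEdges {v}) = k} + #{v | #(G.cutEdges {v}) = k + 1} = G.nV := by
    rw [nV, ← card_univ, ← card_union_of_disjoint, ← filter_or,
      filter_true_of_mem fun v _ => hstar v]
    exact disjoint_filter.2 fun v _ hv hv' => by omega
  have hpair {i : ℕ} (hi : G.cutCount i ≤ #{v | #(G.cutEdges {v}) = i}) :
      #(G.cutEdges {u, v}) ≠ i := by
    intro huvi
    have hle := (h.mono hk).card_star_add_card_pair_le_cutCount hV i
    have hpos : 0 < #{A : Finset G.V | #A = 2 ∧ #(G.cutEdges A) = i} :=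
      card_pos.2 ⟨{u, v}, (mem_filter_univ _).2 ⟨card_pair huv, huvi⟩⟩
    omega
  have hge : k ≤ #(G.cutEdges {u, v}) := by
    refine h.le_card_cutEdges (insert_nonempty u _) fun huniv => ?_
    have := congrArg card huniv
    rw [card_pair huv, card_univ, ← nV] at this
    omega
  have hne := hpair (i := k) (by omega)
  have hne' := hpair (i := k + 1) (by omega)
  omega

end Stars

end Multigraph

section PathUnionEdge

variable {V : Type*} {C : SimpleGraph V} [C.LocallyFinite] {a b u v : V}

theorem adj_iff_of_degree_eq_one (h : C.Adj u v) (hdeg : C.degree u = 1) {x : V} :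
    C.Adj u x ↔ x = v := by
  obtain ⟨w, -, hw⟩ := (C.degree_eq_one_iff_existsUnique_adj).1 hdeg
  exact ⟨fun hx => (hw x hx).trans (hw v h).symm, fun hx => hx ▸ h⟩

theorem exists_adj_iff_of_degree_eq_two (h : C.Adj u v) (hdeg : C.degree u = 2) :
    ∃ w, v ≠ w ∧ ∀ x, C.Adj u x ↔ x = v ∨ x = w := by
  rw [← C.card_neighborFinset_eq_degree, card_eq_two] at hdeg
  obtain ⟨y, z, hyz, hN⟩ := hdeg
  have hadj (x : V) : C.Adj u x ↔ x = y ∨ x = z := by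
    rw [← C.mem_neighborFinset, hN, mem_insert, mem_singleton]
  obtain rfl | rfl := (hadj v).1 h
  exacts [⟨z, hyz, hadj⟩, ⟨y, hyz.symm, fun x => (hadj x).trans or_comm⟩]

theorem exists_adj_iff_path (hab : C.Adj a b) (ha : C.degree a = 2) (hb : C.degree b = 2)
    (hdeg : ∀ v, v ≠ a → v ≠ b → C.degree v = 1) :
    ∃ c d, [a, b, c, d].Nodup ∧ ∀ x, (C.Adj a x ↔ x = b ∨ x = c) ∧ (C.Adj b x ↔ x = a ∨ x = d) ∧
      (C.Adj c x ↔ x = a) ∧ (C.Adj d x ↔ x = b) := by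
  obtain ⟨c, hbc, adj_a⟩ := exists_adj_iff_of_degree_eq_two hab ha
  obtain ⟨d, had, adj_b⟩ := exists_adj_iff_of_degree_eq_two hab.symm hb
  have hac : C.Adj a c := (adj_a c).2 (Or.inr rfl)
  have hbd : C.Adj b d := (adj_b d).2 (Or.inr rfl)
  have adj_c {x} := adj_iff_of_degree_eq_one hac.symm (hdeg c hac.ne' hbc.symm) (x := x)
  have adj_d {x} := adj_iff_of_degree_eq_one hbd.symm (hdeg d had.symm hbd.ne') (x := x)
  have hcd : c ≠ d := by
    rintro rfl
    exact hab.ne (adj_d.1 hac.symm)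
  refine ⟨c, d, ?_, fun x => ⟨adj_a x, adj_b x, adj_c, adj_d⟩⟩
  simp [hab.ne, hac.ne, had, hbc, hbd.ne, hcd]

/-- The neighbours of each vertex in the path `2 - 0 - 1 - 3` together with the edge `4 - 5`. -/
def pathUnionEdgeNeighbors : Fin 6 → Finset (Fin 6) := ![{1, 2}, {0, 3}, {0}, {1}, {5}, {4}]

theorem exists_equiv_pathUnionEdge [Fintype V] (hV : Fintype.card V = 6) (hab : C.Adj a b)
    (ha : C.degree a = 2) (hb : C.degree b = 2)
    (hdeg : ∀ v, v ≠ a → v ≠ b → C.degree v = 1) :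
    ∃ σ : Fin 6 ≃ V, ∀ i j, C.Adj (σ i) (σ j) ↔ j ∈ pathUnionEdgeNeighbors i := by
  obtain ⟨c, d, hnodup, hpath⟩ := exists_adj_iff_path hab ha hb hdeg
  obtain ⟨e, f, hef, hcompl⟩ : ∃ e f, e ≠ f ∧ [a, b, c, d].toFinsetᶜ = {e, f} := by
    rw [← card_eq_two, card_compl, hV, List.toFinset_card_of_nodup hnodup]
    rfl
  have mem_pair (v) : v = e ∨ v = f ↔ v ≠ a ∧ v ≠ b ∧ v ≠ c ∧ v ≠ d := by
    simpa using (Finset.ext_iff.1 hcompl v).symm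
  have he := (mem_pair e).1 (Or.inl rfl)
  have hf := (mem_pair f).1 (Or.inr rfl)
  obtain ⟨g, heg, -⟩ := C.degree_eq_one_iff_existsUnique_adj.1 (hdeg e he.1 he.2.1)
  have hg : g = e ∨ g = f := by
    rw [mem_pair]
    have := hpath e
    refine ⟨?_, ?_, ?_, ?_⟩ <;> rintro rfl <;> have := heg.symm <;> tauto
  obtain rfl : g = f := hg.resolve_left heg.ne'
  have adj_e {x} := adj_iff_of_degree_eq_one heg (hdeg e he.1 he.2.1) (x := x)
  have adj_g {x} := adj_iff_of_degree_eq_one heg.symm (hdeg g hf.1 hf.2.1) (x := x)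
  have hinj : Function.Injective ![a, b, c, d, e, g] := by
    refine List.nodup_ofFn.1 (List.Nodup.append hnodup (by simpa using hef) fun v hv hv' => ?_)
    have hmem : v ∈ ({e, g} : Finset V) := by simpa using hv'
    rw [← hcompl, mem_compl, List.mem_toFinset] at hmem
    exact hmem hv
  let σ := Equiv.ofBijective _ ((Fintype.bijective_iff_injective_and_card _).2 ⟨hinj, hV.symm⟩)
  have hN (i : Fin 6) (x : V) : C.Adj (σ i) x ↔ x ∈ (pathUnionEdgeNeighbors i).image σ := by
    fin_cases i <;> simp [σ, pathUnionEdgeNeighbors, hpath, adj_e, adj_g, eq_comm]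
  exact ⟨σ, fun i j => by simp [hN]⟩

end PathUnionEdge

section OfEnds

/-- The multigraph on the vertices `Fin n` whose edge `e : Fin m` joins the two components of
`ends e`. -/
abbrev ofEnds {n m : ℕ} (ends : Fin m → Fin n × Fin n) : Multigraph where
  V := Fin n
  E := Fin m
  src e := (ends e).1
  tgt e := (ends e).2

/-- A version of `Multigraph.cutEdges` for `ofEnds ends` that the kernel can evaluate. -/
def crossingEdges {n m : ℕ} (ends : Fin m → Fin n × Fin n) (A : Finset (Fin n)) : Finset (Fin m) :=
  {e | ¬ ((ends e).1 ∈ A ↔ (ends e).2 ∈ A)}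

namespace Multigraph

variable {n m k : ℕ} {ends : Fin m → Fin n × Fin n}

theorem cutEdges_ofEnds (A : Finset (Fin n)) :
    (ofEnds ends).cutEdges A = crossingEdges ends A := by
  ext e
  rw [mem_cutEdges, crossingEdges, mem_filter_univ]
  tauto

theorem isCut_ofEnds_iff {C : Finset (Fin m)} :
    (ofEnds ends).IsCut C ↔ ∃ A, A.Nonempty ∧ A ≠ univ ∧ C = crossingEdges ends A := by
  simp only [IsCut, cutEdges_ofEnds]

theorem isEdgeConnected_ofEnds_iff :
    (ofEnds ends).IsEdgeConnected k ↔
      ∀ A : Finset (Fin n), A.Nonempty → A ≠ univ → k ≤ #(crossingEdges ends A) := by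
  simp only [IsEdgeConnected, isCut_ofEnds_iff]
  grind

theorem cutCount_ofEnds (i : ℕ) :
    (ofEnds ends).cutCount i =
      #(image (crossingEdges ends) {A | A.Nonempty ∧ A ≠ univ ∧ #(crossingEdges ends A) = i}) := by
  rw [cutCount]
  congr 1
  ext C
  simp only [isCut_ofEnds_iff, mem_filter_univ, mem_image]
  grind

theorem connOn_ofEnds_iff {ends : Fin m → Fin (n + 1) × Fin (n + 1)} {S : Finset (Fin m)} :
    (ofEnds ends).ConnOn S ↔ ∀ A : Finset (Fin (n + 1)), 0 ∈ A → A ≠ univ →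
      ∃ e ∈ S, e ∈ crossingEdges ends A := by
  simp only [connOn_iff_forall_isCut, isCut_ofEnds_iff, ← not_disjoint_iff]
  constructor
  · exact fun h A h0 hA => h _ ⟨A, ⟨0, h0⟩, hA, rfl⟩
  · rintro h _ ⟨A, hne, hA, rfl⟩
    by_cases h0 : 0 ∈ A
    · exact h A h0 hA
    · have hcompl : crossingEdges ends Aᶜ = crossingEdges ends A := by
        ext e
        simp only [crossingEdges, mem_filter_univ, mem_compl, not_iff_not]
      rw [← hcompl]
      exact h Aᶜ (mem_compl.2 h0) ((compl_ne_univ_iff_nonempty A).2 hne)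

theorem treeCount_ofEnds (ends : Fin m → Fin (n + 1) × Fin (n + 1)) :
    (ofEnds ends).treeCount =
      #{S ∈ powersetCard n univ | ∀ A : Finset (Fin (n + 1)), 0 ∈ A → A ≠ univ →
        ∃ e ∈ S, e ∈ crossingEdges ends A} := by
  rw [treeCount]
  congr 1
  ext S
  rw [mem_filter_univ, mem_filter, mem_powersetCard_univ, connOn_ofEnds_iff, nV, Fintype.card_fin,
    Nat.add_right_cancel_iff]

theorem deg_ofEnds (v : Fin n) :
    (ofEnds ends).deg v = #{e | (ends e).1 = v} + #{e | (ends e).2 = v} := by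
  rw [deg]
  congr!

theorem isSimple_ofEnds (hlt : ∀ e, (ends e).1 < (ends e).2) (hinj : Function.Injective ends) :
    (ofEnds ends).IsSimple := by
  refine ⟨fun e => (hlt e).ne, fun e f hef => hinj ?_⟩
  rcases hef with ⟨h1, h2⟩ | ⟨h1, h2⟩
  · exact Prod.ext h1 h2
  · have he := hlt e
    have hf := hlt f
    simp only at h1 h2
    omega

end Multigraph

end OfEnds

section Candidates

/-- The complement in `K₆` of the path `2 - 0 - 1 - 3` together with the edge `4 - 5`. -/
abbrev coP4K2 : Multigraph :=
  ofEnds (n := 6)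
    ![(0, 3), (0, 4), (0, 5), (1, 2), (1, 4), (1, 5), (2, 3), (2, 4), (2, 5), (3, 4), (3, 5)]

/-- The complement in `K₆` of the two paths `1 - 0 - 2` and `4 - 3 - 5`. -/
abbrev coP3P3 : Multigraph :=
  ofEnds (n := 6)
    ![(0, 3), (0, 4), (0, 5), (1, 2), (1, 3), (1, 4), (1, 5), (2, 3), (2, 4), (2, 5), (4, 5)]

theorem isEdgeConnected_coP4K2 : coP4K2.IsEdgeConnected 3 := by
  rw [Multigraph.isEdgeConnected_ofEnds_iff]
  decide +kernel

theorem isEdgeConnected_coP3P3 : coP3P3.IsEdgeConnected 3 := by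
  rw [Multigraph.isEdgeConnected_ofEnds_iff]
  decide +kernel

theorem memG_coP4K2 : memG coP4K2 6 11 :=
  ⟨rfl, rfl, Multigraph.IsEdgeConnected.connected (isEdgeConnected_coP4K2.mono (by norm_num))⟩

theorem memG_coP3P3 : memG coP3P3 6 11 :=
  ⟨rfl, rfl, Multigraph.IsEdgeConnected.connected (isEdgeConnected_coP3P3.mono (by norm_num))⟩

theorem isSimple_coP4K2 : coP4K2.IsSimple :=
  Multigraph.isSimple_ofEnds (by decide) (by decide)

theorem isSimple_coP3P3 : coP3P3.IsSimple :=
  Multigraph.isSimple_ofEnds (by decide) (by decide)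

theorem deg_coP4K2 (v : Fin 6) : coP4K2.deg v = ![3, 3, 4, 4, 4, 4] v := by
  rw [Multigraph.deg_ofEnds]
  decide +revert

theorem deg_coP3P3 (v : Fin 6) : coP3P3.deg v = ![3, 4, 4, 3, 4, 4] v := by
  rw [Multigraph.deg_ofEnds]
  decide +revert

theorem cutCount_three_coP4K2 : coP4K2.cutCount 3 = 2 := by
  rw [Multigraph.cutCount_ofEnds]
  decide +kernel

theorem cutCount_four_coP4K2 : coP4K2.cutCount 4 = 4 := by
  rw [Multigraph.cutCount_ofEnds]
  decide +kernel

theorem treeCount_coP4K2 : coP4K2.treeCount = 224 := by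
  rw [Multigraph.treeCount_ofEnds]
  decide +kernel

theorem treeCount_coP3P3 : coP3P3.treeCount = 225 := by
  rw [Multigraph.treeCount_ofEnds]
  decide +kernel

theorem card_deg_eq_four_coP4K2 : #{v | coP4K2.deg v = 4} = 4 := by
  simp only [deg_coP4K2]
  decide

theorem card_deg_eq_three_coP4K2 : #{v | coP4K2.deg v = 3} = 2 := by
  simp only [deg_coP4K2]
  decide

theorem not_adj_coP4K2 (u v : Fin 6) (hu : coP4K2.deg u = 3) (hv : coP4K2.deg v = 3)
    (huv : u ≠ v) : ¬ coP4K2.Adj u v := by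
  rw [deg_coP4K2] at hu hv
  unfold Multigraph.Adj
  decide +revert

theorem card_deg_eq_four_coP3P3 : #{v | coP3P3.deg v = 4} = 4 := by
  simp only [deg_coP3P3]
  decide

theorem card_deg_eq_three_coP3P3 : #{v | coP3P3.deg v = 3} = 2 := by
  simp only [deg_coP3P3]
  decide

theorem adj_coP3P3 : ∃ u v, coP3P3.deg u = 3 ∧ coP3P3.deg v = 3 ∧ u ≠ v ∧ coP3P3.Adj u v :=
  ⟨0, 3, deg_coP3P3 0, deg_coP3P3 3, by decide, 0, Or.inl ⟨rfl, rfl⟩⟩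

end Candidates

section Optimality

open Multigraph

variable {H : Multigraph} {p : ℝ}

theorem Multigraph.IsEdgeConnected.exists_compl_adj_and_degree_eq (h : H.IsEdgeConnected 3)
    (hV : H.nV = 6) (hE : H.nE = 11) (h3 : H.cutCount 3 ≤ 2) (h4 : H.cutCount 4 ≤ 4) :
    ∃ a b, (H.simpleGraphOn univ)ᶜ.Adj a b ∧ (H.simpleGraphOn univ)ᶜ.degree a = 2 ∧
      (H.simpleGraphOn univ)ᶜ.degree b = 2 ∧
      ∀ v, v ≠ a → v ≠ b → (H.simpleGraphOn univ)ᶜ.degree v = 1 := by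
  obtain ⟨hstar, hcard⟩ := h.card_star_eq (by norm_num) (by omega) (c := 2) (by omega) h3
  have hinter {u v} (huv : u ≠ v) : 5 + 2 * #(H.cutEdges {u} ∩ H.cutEdges {v}) ≤
      #(H.cutEdges {u}) + #(H.cutEdges {v}) := by
    rw [← card_symmDiff_add_two_mul_card_inter, ← cutEdges_pair huv]
    have := h.le_card_cutEdges_pair (by norm_num) (by omega) (c := 2) (by omega) h3
      (by rw [hV]; exact Nat.add_le_add_right h4 2) huv
    omega
  have hdeg (v) : (H.simpleGraphOn univ)ᶜ.degree v = 5 - #(H.cutEdges {v}) := by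
    rw [SimpleGraph.degree_compl, ← nV, hV, degree_simpleGraphOn_univ]
    intro u v huv
    have := hinter huv
    rcases hstar u with hu | hu <;> rcases hstar v with hv | hv <;> omega
  obtain ⟨a, b, hab, hfilter⟩ := card_eq_two.1 hcard
  have mem_pair (v) : #(H.cutEdges {v}) = 3 ↔ v = a ∨ v = b := by
    simpa using Finset.ext_iff.1 hfilter v
  have ha := (mem_pair a).2 (Or.inl rfl)
  have hb := (mem_pair b).2 (Or.inr rfl)
  refine ⟨a, b, ?_, by rw [hdeg, ha], by rw [hdeg, hb], fun v hva hvb => ?_⟩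
  · rw [SimpleGraph.compl_adj, simpleGraphOn_univ_adj, ← card_pos]
    have := hinter hab
    exact ⟨hab, by omega⟩
  · rw [hdeg, (hstar v).resolve_left fun hv => ((mem_pair v).1 hv).elim hva hvb]

theorem Multigraph.IsEdgeConnected.isIso_coP4K2 (h : H.IsEdgeConnected 3)
    (hV : H.nV = 6) (hE : H.nE = 11) (h3 : H.cutCount 3 ≤ 2) (h4 : H.cutCount 4 ≤ 4) :
    IsIso coP4K2 H := by
  obtain ⟨a, b, hab, ha, hb, hdeg⟩ := h.exists_compl_adj_and_degree_eq hV hE h3 h4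
  obtain ⟨σ, hσ⟩ := exists_equiv_pathUnionEdge hV hab ha hb hdeg
  refine isSimple_coP4K2.isIso_of_equiv hE.symm σ fun e => ?_
  have hends : coP4K2.tgt e ∉ pathUnionEdgeNeighbors (coP4K2.src e) := by decide +revert
  rw [← hσ, SimpleGraph.compl_adj, not_and_not_right] at hends
  obtain ⟨f, -, hf⟩ := (simpleGraphOn_adj.1 (hends (σ.injective.ne (isSimple_coP4K2.1 e)))).2
  exact ⟨f, hf⟩

theorem exists_d_coP4K2_lt (hH : memG H 6 11) (hiso : ¬ IsIso coP4K2 H) :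
    ∃ k, (∀ i < k, coP4K2.d i ≤ H.d i) ∧ coP4K2.d k < H.d k := by
  obtain ⟨hV, hE, -⟩ := hH
  have hd {i} (hi : i < 3) : coP4K2.d i = 0 := isEdgeConnected_coP4K2.d_eq_zero hi
  have hd3 : coP4K2.d 3 = 2 := by
    rw [isEdgeConnected_coP4K2.d_eq_cutCount, cutCount_three_coP4K2]
  have hd4 : coP4K2.d 4 = 2 * 8 + 4 := by
    rw [isEdgeConnected_coP4K2.d_succ_eq le_rfl, cutCount_three_coP4K2, cutCount_four_coP4K2,
      memG_coP4K2.2.1]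
  by_cases hconn : H.IsEdgeConnected 3
  · have hge : 2 ≤ H.cutCount 3 := hconn.le_cutCount (by norm_num) (by omega) (by omega)
    obtain hlt | heq := hge.lt_or_eq
    · refine ⟨3, fun i hi => (hd hi).trans_le (Nat.zero_le _), ?_⟩
      rwa [hd3, hconn.d_eq_cutCount]
    · have hlt : 4 < H.cutCount 4 := by
        by_contra! hle
        exact hiso (hconn.isIso_coP4K2 hV hE heq.ge hle)
      refine ⟨4, fun i hi => ?_, ?_⟩
      · obtain rfl | hi := Nat.lt_succ_iff_lt_or_eq.1 hi |>.symm
        · rw [hd3, hconn.d_eq_cutCount, heq]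
        · exact (hd hi).trans_le (Nat.zero_le _)
      · rw [hd4, hconn.d_succ_eq le_rfl, ← heq, hE]
        exact Nat.add_lt_add_left hlt _
  · simp only [IsEdgeConnected, not_forall, not_le] at hconn
    obtain ⟨C, hC, hcard⟩ := hconn
    refine ⟨2, fun i hi => (hd (by omega)).trans_le (Nat.zero_le _), ?_⟩
    rw [hd (by norm_num)]
    exact d_pos_of_isCut hC (by omega) (by omega)

theorem rel_lt_rel_coP4K2 (hH : memG H 6 11) (hiso : ¬ IsIso coP4K2 H) (hp : p < 1)
    (hp' : (2 ^ 11 + 2) * (1 - p) ≤ 1) : H.rel p < coP4K2.rel p := by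
  obtain ⟨k, hlt, hk⟩ := exists_d_coP4K2_lt hH hiso
  exact rel_lt_rel_of_d (memG_coP4K2.2.1.trans hH.2.1.symm) hp (by rwa [memG_coP4K2.2.1]) hlt hk

theorem pOptimal_coP4K2 (hp : p < 1) (hp' : (2 ^ 11 + 2) * (1 - p) ≤ 1) :
    pOptimal coP4K2 6 11 p := by
  refine ⟨memG_coP4K2, fun H hH => ?_⟩
  by_cases hiso : IsIso coP4K2 H
  · exact (hiso.rel_eq p).ge
  · exact (rel_lt_rel_coP4K2 hH hiso hp hp').le

theorem pOptimal.isIso_coP4K2 (h : pOptimal H 6 11 p) (hp : p < 1)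
    (hp' : (2 ^ 11 + 2) * (1 - p) ≤ 1) : IsIso coP4K2 H := by
  by_contra hiso
  exact (rel_lt_rel_coP4K2 h.1 hiso hp hp').not_ge (h.2 coP4K2 memG_coP4K2)

theorem rel_coP4K2_lt_rel_coP3P3 (hp : 0 < p) (hp' : (2 ^ 11 + 2) * p ≤ 1) :
    coP4K2.rel p < coP3P3.rel p := by
  have hT : coP4K2.treeCount < coP3P3.treeCount := by
    rw [treeCount_coP4K2, treeCount_coP3P3]
    norm_num
  exact rel_lt_rel_of_treeCount (memG_coP4K2.1.trans memG_coP3P3.1.symm)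
    (memG_coP4K2.2.1.trans memG_coP3P3.2.1.symm) hT hp (by rwa [memG_coP4K2.2.1])

end Optimality

section WeakSubdivision

variable {G D : Multigraph} {V : Type} {w : D.E → ℕ} {e : D.E}

theorem balancedWeights_of_le_one {E : Type} {w : E → ℕ} (hw : ∀ e, w e ≤ 1) : BalancedWeights w :=
  fun e f => (hw e).trans (Nat.le_add_left 1 (w f))

theorem nE_subdivide : (subdivide D w).nE = ∑ e, w e := by
  calc (subdivide D w).nE = Fintype.card (Σ e, Fin (w e)) := Fintype.card_congr (Equiv.refl _)
    _ = ∑ e, w e := by simp only [Fintype.card_sigma, Fintype.card_fin]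

theorem subdivide_src_zero (he : 0 < w e) :
    (subdivide D w).src ⟨e, 0, he⟩ = Sum.inl (Quot.mk _ (D.src e)) := by
  simp [subdivide, chainNode]

theorem subdivide_tgt_zero (he : w e = 1) :
    (subdivide D w).tgt ⟨e, 0, he.symm ▸ Nat.one_pos⟩ = Sum.inl (Quot.mk _ (D.tgt e)) := by
  simp [subdivide, chainNode, he]

/-- If `cls` is constant along the zero-weight edges and each vertex `v` is equal or adjacent by
such an edge to the representative `rep (cls v)` of its class, then `V` is the vertex set obtained
by contracting the zero-weight edges. -/
def zeroQuotEquiv (cls : D.V → V) (rep : V → D.V)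
    (hcls : ∀ e, w e = 0 → cls (D.src e) = cls (D.tgt e)) (hrep : ∀ x, cls (rep x) = x)
    (hadj : ∀ v, v = rep (cls v) ∨ ∃ e, w e = 0 ∧
      ((D.src e = v ∧ D.tgt e = rep (cls v)) ∨ (D.src e = rep (cls v) ∧ D.tgt e = v))) :
    Quot (zeroRel D w) ≃ V where
  toFun := Quot.lift cls <| by
    rintro _ _ ⟨e, he, rfl, rfl⟩
    exact hcls e he
  invFun x := Quot.mk _ (rep x)
  left_inv := by
    rintro ⟨v⟩
    rcases hadj v with h | ⟨e, he, ⟨hsrc, htgt⟩ | ⟨hsrc, htgt⟩⟩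
    · exact congrArg _ h.symm
    · exact (Quot.sound ⟨e, he, hsrc, htgt⟩).symm
    · exact Quot.sound ⟨e, he, hsrc, htgt⟩
  right_inv := hrep

theorem isWeakSubdivision_of_le_one (hG : G.IsSimple) (hw : ∀ e, w e ≤ 1)
    (hsum : ∑ e, w e = G.nE) (hzero : G.nV + #{e | w e = 0} = D.nV)
    (φ : Quot (zeroRel D w) ≃ G.V)
    (hφ : ∀ e, ∃ f, w f = 1 ∧
      ((φ (Quot.mk _ (D.src f)) = G.src e ∧ φ (Quot.mk _ (D.tgt f)) = G.tgt e) ∨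
        (φ (Quot.mk _ (D.src f)) = G.tgt e ∧ φ (Quot.mk _ (D.tgt f)) = G.src e))) :
    IsWeakSubdivision G D w := by
  have hempty : IsEmpty (Σ f : D.E, Fin (w f - 1)) :=
    ⟨fun x => by have := hw x.1; have := x.2.2; omega⟩
  let σ : G.V ≃ (subdivide D w).V := φ.symm.trans (Equiv.sumEmpty _ _).symm
  refine ⟨by rwa [ZeroAcyclic, Fintype.card_congr φ],
    hG.isIso_of_equiv (hsum.symm.trans nE_subdivide.symm) σ fun e => ?_⟩
  have hσ (q : Quot (zeroRel D w)) : Sum.inl q = σ (φ q) :=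
    congrArg Sum.inl (φ.symm_apply_apply q).symm
  obtain ⟨f, hf, h⟩ := hφ e
  refine ⟨⟨f, 0, hf.symm ▸ Nat.one_pos⟩, ?_⟩
  rw [subdivide_src_zero, subdivide_tgt_zero hf, hσ, hσ]
  exact h.imp (And.imp (congrArg σ) (congrArg σ)) (And.imp (congrArg σ) (congrArg σ))

end WeakSubdivision

section Petersen

instance : DecidableEq petersen.V := inferInstanceAs (DecidableEq (Fin 5 × Bool))

/-- Chain lengths on the outer cycle, the spokes and the inner cycle of the Petersen graph whose
weak subdivision is `coP4K2`. -/
def coP4K2Weight : petersen.E → ℕ :=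
  Sum.elim ![0, 1, 0, 1, 1] (Sum.elim ![1, 1, 1, 1, 0] ![1, 1, 1, 0, 1])

/-- The vertex of `coP4K2` onto which a vertex of the Petersen graph is contracted. -/
def coP4K2Class (v : petersen.V) : Fin 6 :=
  if v.2 then ![5, 1, 0, 5, 4] v.1 else ![2, 2, 3, 3, 4] v.1

/-- In each fibre of `coP4K2Class`, a vertex joined to every other one by an edge of weight zero. -/
def coP4K2Rep : Fin 6 → petersen.V :=
  ![(2, true), (1, true), (0, false), (2, false), (4, true), (0, true)]

/-- Chain lengths on the outer cycle, the spokes and the inner cycle of the Petersen graph whose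
weak subdivision is `coP3P3`. -/
def coP3P3Weight : petersen.E → ℕ :=
  Sum.elim ![0, 1, 0, 1, 1] (Sum.elim ![1, 1, 1, 1, 0] ![0, 1, 1, 1, 1])

/-- The vertex of `coP3P3` onto which a vertex of the Petersen graph is contracted. -/
def coP3P3Class (v : petersen.V) : Fin 6 :=
  if v.2 then ![5, 3, 5, 0, 2] v.1 else ![1, 1, 4, 4, 2] v.1

/-- In each fibre of `coP3P3Class`, a vertex joined to every other one by an edge of weight zero. -/
def coP3P3Rep : Fin 6 → petersen.V :=
  ![(3, true), (0, false), (4, true), (1, true), (2, false), (0, true)]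

theorem coP4K2Weight_le_one : ∀ e, coP4K2Weight e ≤ 1 := by decide

theorem coP3P3Weight_le_one : ∀ e, coP3P3Weight e ≤ 1 := by decide

theorem isWeakSubdivision_coP4K2 : IsWeakSubdivision coP4K2 petersen coP4K2Weight :=
  isWeakSubdivision_of_le_one isSimple_coP4K2 coP4K2Weight_le_one (by decide) (by decide)
    (zeroQuotEquiv coP4K2Class coP4K2Rep (by decide) (by decide) (by decide)) (by decide)

theorem isWeakSubdivision_coP3P3 : IsWeakSubdivision coP3P3 petersen coP3P3Weight :=
  isWeakSubdivision_of_le_one isSimple_coP3P3 coP3P3Weight_le_one (by decide) (by decide)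
    (zeroQuotEquiv coP3P3Class coP3P3Rep (by decide) (by decide) (by decide)) (by decide)

end Petersen

/-- in 𝒢_{6,11} the unique graph optimal for p near 1 is the simple graph
G with degree sequence (4,4,4,4,3,3) whose degree-3 vertices are non-adjacent (a
balanced weak subdivision of the Petersen graph, with 224 spanning trees); the other
simple graph G' with that degree sequence (degree-3 vertices adjacent, also a balanced
weak subdivision of Petersen) has 225 spanning trees and beats G for p near 0;
hence no uniquely optimal graph exists in 𝒢_{6,11}. -/
theorem no_uniquely_optimal_6_11 :
    ∃ G G' : Multigraph,
      memG G 6 11 ∧ memG G' 6 11 ∧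
      G.IsSimple ∧
      (Finset.univ.filter fun v : G.V => G.deg v = 4).card = 4 ∧
      (Finset.univ.filter fun v : G.V => G.deg v = 3).card = 2 ∧
      (∀ u v : G.V, G.deg u = 3 → G.deg v = 3 → u ≠ v → ¬ G.Adj u v) ∧
      (∃ w : petersen.E → ℕ,
        IsWeakSubdivision G petersen w ∧ BalancedWeights w) ∧
      G'.IsSimple ∧
      (Finset.univ.filter fun v : G'.V => G'.deg v = 4).card = 4 ∧
      (Finset.univ.filter fun v : G'.V => G'.deg v = 3).card = 2 ∧
      (∃ u v : G'.V, G'.deg u = 3 ∧ G'.deg v = 3 ∧ u ≠ v ∧ G'.Adj u v) ∧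
      (∃ w : petersen.E → ℕ,
        IsWeakSubdivision G' petersen w ∧ BalancedWeights w) ∧
      (∃ p₀ : ℝ, 0 < p₀ ∧ p₀ < 1 ∧ ∀ p : ℝ, p₀ < p → p < 1 →
        pOptimal G 6 11 p ∧
        ∀ H : Multigraph, pOptimal H 6 11 p → IsIso G H) ∧
      G.treeCount = 224 ∧ G'.treeCount = 225 ∧
      (∃ p₁ : ℝ, 0 < p₁ ∧ p₁ < 1 ∧ ∀ p : ℝ, 0 < p → p < p₁ →
        G.rel p < G'.rel p) ∧
      ¬ ∃ H : Multigraph, UniquelyOptimal H 6 11 := by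
  have near_one {p : ℝ} (hp : 2049 / 2050 < p) : (2 ^ 11 + 2) * (1 - p) ≤ 1 := by linarith
  have near_zero {p : ℝ} (hp : p < 1 / 2050) : (2 ^ 11 + 2) * p ≤ 1 := by linarith
  exact ⟨coP4K2, coP3P3, memG_coP4K2, memG_coP3P3,
    isSimple_coP4K2, card_deg_eq_four_coP4K2, card_deg_eq_three_coP4K2, not_adj_coP4K2,
    ⟨coP4K2Weight, isWeakSubdivision_coP4K2, balancedWeights_of_le_one coP4K2Weight_le_one⟩,
    isSimple_coP3P3, card_deg_eq_four_coP3P3, card_deg_eq_three_coP3P3, adj_coP3P3,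
    ⟨coP3P3Weight, isWeakSubdivision_coP3P3, balancedWeights_of_le_one coP3P3Weight_le_one⟩,
    ⟨2049 / 2050, by norm_num, by norm_num, fun p hp hp1 =>
      ⟨pOptimal_coP4K2 hp1 (near_one hp), fun H hH => hH.isIso_coP4K2 hp1 (near_one hp)⟩⟩,
    treeCount_coP4K2, treeCount_coP3P3,
    ⟨1 / 2050, by norm_num, by norm_num, fun p hp hp1 =>
      rel_coP4K2_lt_rel_coP3P3 hp (near_zero hp1)⟩,
    not_exists_uniquelyOptimal (p := 4099 / 4100) (q := 1 / 4100) (by norm_num) (by norm_num)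
      (fun K hK => hK.isIso_coP4K2 (by norm_num) (near_one (by norm_num)))
      (by norm_num) (by norm_num) memG_coP3P3
      (rel_coP4K2_lt_rel_coP3P3 (by norm_num) (near_zero (by norm_num)))⟩
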